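/- In a finite Markov chain, almost surely every bad run (a run whose limit BSCC is bad) has a finite prefix π such that K(π) is defined and equals a bad BSCC. -/

import Mathlib

/-!
The only probabilistic input is that, almost surely, a run never takes a transition of probability
zero (`ae_adj`), and that it takes the transition `a → b` infinitely often whenever it visits `a`
infinitely often and `P a b > 0` (`ae_frequently_edge`). The second fact is Lévy's conditional
Borel–Cantelli lemma: by the Markov property the conditional probability, given the first `k`
steps, of taking `a → b` at step `k` is `P a b` when the run is at `a` and `0` otherwise, and these
sum to infinity if `a` is visited infinitely often.

The rest is deterministic (`exists_candidate`). A run trapped in a BSCC `B` visits some state of `B`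
infinitely often by finiteness, hence every state of `B` by strong connectivity, hence takes every
edge of `B` infinitely often. Let `N` be a time after which the run stays in `B`. For a long enough
prefix `π`, the suffix `κ` starting at time `N` has vertex set `B` and contains all edges of `B`, so
`B` is strongly connected in both traversed graphs. As all traversed edges are edges of the chain
and no such edge leaves `B`, the set `B` is a bottom SCC of the traversed graph of `π`.
-/

open MeasureTheory

def Adj {S : Type*} (P : S → S → ℝ) (s t : S) : Prop := 0 < P s t

def StronglyConn {S : Type*} (r : S → S → Prop) (K : Set S) : Prop :=
  K.Nonempty ∧ ∀ s ∈ K, ∀ t ∈ K,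
    Relation.ReflTransGen (fun a b => r a b ∧ a ∈ K ∧ b ∈ K) s t

def IsSCC {S : Type*} (r : S → S → Prop) (K : Set S) : Prop :=
  StronglyConn r K ∧ ∀ K' : Set S, K ⊆ K' → StronglyConn r K' → K' = K

def IsBSCC {S : Type*} (r : S → S → Prop) (K : Set S) : Prop :=
  IsSCC r K ∧ ∀ s ∈ K, ∀ t, r s t → t ∈ K

def ListAdj {V : Type*} (π : List V) (a b : V) : Prop := (a, b) ∈ π.zip π.tail

def Vset {V : Type*} (π : List V) : Set V := {v | v ∈ π}

def IsCandidate {V : Type*} (π : List V) (B : Set V) : Prop :=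
  ∃ κ : List V, κ <:+ π ∧ Vset κ = B ∧ IsBSCC (ListAdj π) B ∧
    StronglyConn (ListAdj κ) (Vset κ)

def PrefList {V : Type*} (ρ : ℕ → V) (m : ℕ) : List V := (List.range (m + 1)).map ρ

def Cyl {S : Type*} (w : List S) : Set (ℕ → S) :=
  {ρ | ∀ i : ℕ, ∀ h : i < w.length, ρ i = w.get ⟨i, h⟩}

open Filter ProbabilityTheory

namespace BadRun

variable {S : Type*}

lemma mem_cyl_edge (ρ ρ₀ : ℕ → S) (k : ℕ) (a b : S) :
    ρ ∈ Cyl ((List.range k).map ρ₀ ++ [a, b]) ↔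
      (∀ i < k, ρ i = ρ₀ i) ∧ ρ k = a ∧ ρ (k + 1) = b := by
  simp only [Cyl, Set.mem_ofPred_eq, List.get_eq_getElem, List.length_append, List.length_map,
    List.length_range, List.length_cons, List.length_nil]
  constructor
  · intro h
    refine ⟨fun i hi => ?_, ?_, ?_⟩
    · simpa [List.getElem_append, hi] using h i (by omega)
    · simpa [List.getElem_append] using h k (by omega)
    · simpa [List.getElem_append] using h (k + 1) (by omega)
  · rintro ⟨h1, h2, h3⟩ i hi
    rcases lt_trichotomy i k with h | rfl | h
    · simpa [List.getElem_append, h] using h1 i h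
    · simpa [List.getElem_append] using h2
    · obtain rfl : i = k + 1 := by omega
      simpa [List.getElem_append] using h3

lemma mem_cyl_vertex (ρ ρ₀ : ℕ → S) (k : ℕ) (a : S) :
    ρ ∈ Cyl ((List.range k).map ρ₀ ++ [a]) ↔ (∀ i < k, ρ i = ρ₀ i) ∧ ρ k = a := by
  simp only [Cyl, Set.mem_ofPred_eq, List.get_eq_getElem, List.length_append, List.length_map,
    List.length_range, List.length_cons, List.length_nil]
  constructor
  · intro h
    refine ⟨fun i hi => ?_, ?_⟩
    · simpa [List.getElem_append, hi] using h i (by omega)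
    · simpa [List.getElem_append] using h k (by omega)
  · rintro ⟨h1, h2⟩ i hi
    rcases lt_or_ge i k with h | h
    · simpa [List.getElem_append, h] using h1 i h
    · obtain rfl : i = k := by omega
      simpa [List.getElem_append] using h2

/-! ### Almost sure behaviour of runs -/

section Prob

variable [Fintype S] [MeasurableSpace S] [MeasurableSingletonClass S]

/-- The Markov property relative to an arbitrary event `D` determined by the first `k` steps,
obtained by splitting `D` into finitely many cylinders. -/
lemma measure_inter_edge (P : S → S → ℝ) (μ : Measure (ℕ → S))
    (hMarkov : ∀ (w : List S) (a b : S),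
      μ (Cyl (w ++ [a, b])) = μ (Cyl (w ++ [a])) * ENNReal.ofReal (P a b))
    (k : ℕ) (a b : S) (D : Set (ℕ → S))
    (hD : MeasurableSet[Filtration.piLE (X := fun _ : ℕ => S) k] D) :
    μ (D ∩ {ρ | ρ k = a ∧ ρ (k + 1) = b}) =
      μ (D ∩ {ρ | ρ k = a}) * ENNReal.ofReal (P a b) := by
  rw [Filtration.piLE_eq_comap_frestrictLe] at hD
  obtain ⟨D', -, rfl⟩ := hD
  have hr : Measurable (Preorder.frestrictLe (π := fun _ : ℕ => S) k) :=
    Preorder.measurable_frestrictLe k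
  have hm : ∀ y ∈ D', MeasurableSet (Preorder.frestrictLe (π := fun _ : ℕ => S) k ⁻¹' {y}) :=
    fun y _ => hr (measurableSet_singleton y)
  have key : ∀ A : Set (ℕ → S), MeasurableSet A →
      μ (Preorder.frestrictLe (π := fun _ : ℕ => S) k ⁻¹' D' ∩ A) =
        ∑' y : D', μ (Preorder.frestrictLe (π := fun _ : ℕ => S) k ⁻¹' {y.1} ∩ A) := by
    intro A hA
    have := tsum_measure_preimage_singleton (μ := μ.restrict A) (Set.to_countable D') hm
    rw [Measure.restrict_apply' hA] at this
    rw [← this]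
    exact tsum_congr fun y => Measure.restrict_apply' hA
  have hmeas : ∀ n (c : S), MeasurableSet {ρ : ℕ → S | ρ n = c} := fun n c =>
    measurableSet_eq_fun (measurable_pi_apply n) measurable_const
  have hsplit : {ρ : ℕ → S | ρ k = a ∧ ρ (k + 1) = b} =
      {ρ | ρ k = a} ∩ {ρ | ρ (k + 1) = b} := rfl
  rw [hsplit, key _ (hmeas k a), key _ ((hmeas k a).inter (hmeas (k + 1) b)), ← ENNReal.tsum_mul_right]
  refine tsum_congr fun ⟨y, _⟩ => ?_
  by_cases hy : y ⟨k, by simp⟩ = a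
  · -- any function extending the finite word `y` represents its cylinder
    let ρ₀ : ℕ → S := fun i => if h : i ∈ Finset.Iic k then y ⟨i, h⟩ else a
    have hfib : ∀ ρ : ℕ → S, Preorder.frestrictLe (π := fun _ : ℕ => S) k ρ = y ↔
        (∀ i < k, ρ i = ρ₀ i) ∧ ρ k = a := by
      intro ρ
      constructor
      · rintro rfl
        refine ⟨fun i hi => ?_, hy⟩
        simp [ρ₀, hi.le]
      · rintro ⟨h1, h2⟩
        funext ⟨i, hi⟩
        rcases (Finset.mem_Iic.1 hi).lt_or_eq with h | rfl
        · simpa [ρ₀, h.le] using h1 i h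
        · simpa [hy] using h2
    have e1 : Preorder.frestrictLe (π := fun _ : ℕ => S) k ⁻¹' {y} ∩ {ρ | ρ k = a} =
        Cyl ((List.range k).map ρ₀ ++ [a]) := by
      ext ρ
      rw [mem_cyl_vertex, Set.mem_inter_iff, Set.mem_preimage, Set.mem_singleton_iff, hfib]
      simp only [Set.mem_ofPred_eq]
      tauto
    have e2 : Preorder.frestrictLe (π := fun _ : ℕ => S) k ⁻¹' {y} ∩
        ({ρ | ρ k = a} ∩ {ρ | ρ (k + 1) = b}) = Cyl ((List.range k).map ρ₀ ++ [a, b]) := by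
      ext ρ
      rw [mem_cyl_edge, Set.mem_inter_iff, Set.mem_preimage, Set.mem_singleton_iff, hfib]
      simp only [Set.mem_ofPred_eq, Set.mem_inter_iff]
      tauto
    rw [e1, e2, hMarkov]
  · have e : Preorder.frestrictLe (π := fun _ : ℕ => S) k ⁻¹' {y} ∩ {ρ | ρ k = a} = ∅ := by
      ext ρ
      simp only [Set.mem_inter_iff, Set.mem_preimage, Set.mem_singleton_iff, Set.mem_ofPred_eq,
        Set.mem_empty_iff_false, iff_false, not_and]
      rintro rfl h
      exact hy h
    rw [e, ← Set.inter_assoc, e]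
    simp

lemma ae_adj (P : S → S → ℝ) (μ : Measure (ℕ → S))
    (hMarkov : ∀ (w : List S) (a b : S),
      μ (Cyl (w ++ [a, b])) = μ (Cyl (w ++ [a])) * ENNReal.ofReal (P a b)) :
    ∀ᵐ ρ ∂μ, ∀ n, Adj P (ρ n) (ρ (n + 1)) := by
  have h : ∀ᵐ ρ ∂μ, ∀ (n : ℕ) (a b : S), ¬ Adj P a b → ¬ (ρ n = a ∧ ρ (n + 1) = b) := by
    simp only [ae_all_iff]
    intro n a b hab
    have := measure_inter_edge P μ hMarkov n a b Set.univ MeasurableSet.univ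
    rw [ENNReal.ofReal_of_nonpos (not_lt.1 hab), mul_zero, Set.univ_inter] at this
    simpa [ae_iff] using this
  filter_upwards [h] with ρ hρ n
  by_contra hn
  exact hρ n _ _ hn ⟨rfl, rfl⟩

/-- An edge of positive probability is almost surely taken infinitely often by the runs that visit
its source infinitely often. -/
lemma ae_frequently_edge (P : S → S → ℝ) (μ : Measure (ℕ → S)) [IsProbabilityMeasure μ]
    (hMarkov : ∀ (w : List S) (a b : S),
      μ (Cyl (w ++ [a, b])) = μ (Cyl (w ++ [a])) * ENNReal.ofReal (P a b)) :
    ∀ᵐ ρ ∂μ, ∀ a b : S, Adj P a b → (∃ᶠ n in atTop, ρ n = a) →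
      ∃ᶠ n in atTop, ρ n = a ∧ ρ (n + 1) = b := by
  simp only [ae_all_iff]
  intro a b hab
  have hp : 0 < P a b := hab
  let ℱ := Filtration.piLE (X := fun _ : ℕ => S)
  have hmeasF : ∀ (n k : ℕ) (c : S), n ≤ k → MeasurableSet[ℱ k] {ρ : ℕ → S | ρ n = c} := by
    intro n k c hnk
    change MeasurableSet[Filtration.piLE (X := fun _ : ℕ => S) k] _
    rw [Filtration.piLE_eq_comap_frestrictLe]
    exact ⟨{y | y ⟨n, by simpa using hnk⟩ = c},
      measurableSet_eq_fun (measurable_pi_apply _) measurable_const, rfl⟩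
  -- `s 0` is irrelevant: it only involves the truncated `0 - 1 = 0`
  let s : ℕ → Set (ℕ → S) := fun n => {ρ | ρ (n - 1) = a ∧ ρ n = b}
  have hs : ∀ n, MeasurableSet[ℱ n] (s n) := fun n =>
    MeasurableSet.inter (hmeasF (n - 1) n a (by omega)) (hmeasF n n b le_rfl)
  have hcond : ∀ k, ({ρ : ℕ → S | ρ k = a}.indicator fun _ => P a b) =ᵐ[μ]
      μ[(s (k + 1)).indicator (1 : (ℕ → S) → ℝ) | ℱ k] := by
    intro k
    have hA := hmeasF k k a le_rfl
    have hA' : MeasurableSet {ρ : ℕ → S | ρ k = a} := ℱ.le k _ hA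
    have hs' : MeasurableSet (s (k + 1)) := ℱ.le _ _ (hs (k + 1))
    refine ae_eq_condExp_of_forall_setIntegral_eq (ℱ.le k) ?_ ?_ ?_ ?_
    · exact (integrable_const (1 : ℝ)).indicator hs'
    · intro D _ _
      exact ((integrable_const _).indicator hA').integrableOn
    · intro D hD _
      have h := measure_inter_edge P μ hMarkov k a b D hD
      have h' := congrArg ENNReal.toReal h
      rw [ENNReal.toReal_mul, ENNReal.toReal_ofReal hp.le] at h'
      have e : s (k + 1) = {ρ | ρ k = a ∧ ρ (k + 1) = b} := by simp [s]
      rw [setIntegral_indicator hA', setIntegral_indicator hs', e]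
      simp only [Pi.one_apply, setIntegral_const, smul_eq_mul, mul_one, Measure.real]
      exact h'.symm
    · exact (stronglyMeasurable_const.indicator hA).aestronglyMeasurable
  filter_upwards [ae_mem_limsup_atTop_iff (ℱ := ℱ) μ hs, ae_all_iff.2 hcond] with ρ h1 h2 hfreq
  have h3 : ρ ∈ limsup s atTop := by
    rw [h1]
    simp only [← h2]
    have : ρ ∈ limsup (fun k => {ρ : ℕ → S | ρ k = a}) atTop :=
      mem_limsup_iff_frequently_mem.2 hfreq
    rw [Set.limsup_eq_tendsto_sum_indicator_atTop hp] at this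
    exact this
  have h4 := mem_limsup_iff_frequently_mem.1 h3
  rw [frequently_atTop] at h4 ⊢
  intro N
  obtain ⟨n, hn, h⟩ := h4 (N + 1)
  obtain ⟨n, rfl⟩ : ∃ j, n = j + 1 := ⟨n - 1, by omega⟩
  exact ⟨n, by omega, by simpa [s] using h⟩

end Prob

/-! ### Traversed graphs of prefixes -/

lemma listAdj_iff {l : List S} {a b : S} :
    ListAdj l a b ↔ ∃ i, l[i]? = some a ∧ l[i + 1]? = some b := by
  simp [ListAdj, List.mem_iff_getElem?, List.getElem?_zip_eq_some]

lemma prefList_getElem? (ρ : ℕ → S) (m i : ℕ) (a : S) :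
    (PrefList ρ m)[i]? = some a ↔ i ≤ m ∧ ρ i = a := by
  rw [PrefList, List.getElem?_eq_some_iff]
  simp

lemma listAdj_drop_iff (ρ : ℕ → S) (m N : ℕ) (a b : S) :
    ListAdj ((PrefList ρ m).drop N) a b ↔
      ∃ i, N ≤ i ∧ i + 1 ≤ m ∧ ρ i = a ∧ ρ (i + 1) = b := by
  simp only [listAdj_iff, List.getElem?_drop, prefList_getElem?, ← add_assoc]
  constructor
  · rintro ⟨i, ⟨-, h1⟩, h2, h3⟩
    exact ⟨N + i, by omega, h2, h1, h3⟩
  · rintro ⟨i, h1, h2, h3, h4⟩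
    obtain ⟨j, rfl⟩ := Nat.exists_eq_add_of_le h1
    exact ⟨j, ⟨by omega, h3⟩, h2, h4⟩

lemma mem_vset_drop_iff (ρ : ℕ → S) (m N : ℕ) (a : S) :
    a ∈ Vset ((PrefList ρ m).drop N) ↔ ∃ i, N ≤ i ∧ i ≤ m ∧ ρ i = a := by
  simp only [Vset, Set.mem_ofPred_eq, List.mem_iff_getElem?, List.getElem?_drop, prefList_getElem?]
  constructor
  · rintro ⟨i, h1, h2⟩
    exact ⟨N + i, by omega, h1, h2⟩
  · rintro ⟨i, h1, h2, h3⟩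
    obtain ⟨j, rfl⟩ := Nat.exists_eq_add_of_le h1
    exact ⟨j, h2, h3⟩

lemma closed_of_reflTransGen {r : S → S → Prop} {B : Set S}
    (hB : ∀ s ∈ B, ∀ t, r s t → t ∈ B) {s t : S} (hs : s ∈ B)
    (h : Relation.ReflTransGen r s t) : t ∈ B := by
  induction h with
  | refl => exact hs
  | tail _ h ih => exact hB _ ih _ h

lemma stronglyConn_mono {r r' : S → S → Prop} {B : Set S}
    (h : ∀ s ∈ B, ∀ t ∈ B, r s t → r' s t) (hB : StronglyConn r B) : StronglyConn r' B :=
  ⟨hB.1, fun s hs t ht => Relation.ReflTransGen.mono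
    (fun a b ⟨h1, h2, h3⟩ => ⟨h a h2 b h3 h1, h2, h3⟩) _ _ (hB.2 s hs t ht)⟩

/-- A run that uses only edges of the chain, takes infinitely often every edge out of a state it
visits infinitely often, and is trapped in the BSCC `B`, has a prefix with candidate `B`. -/
lemma exists_candidate [Fintype S] (P : S → S → ℝ) (ρ : ℕ → S)
    (hadj : ∀ n, Adj P (ρ n) (ρ (n + 1)))
    (hfreq : ∀ a b : S, Adj P a b → (∃ᶠ n in atTop, ρ n = a) →
      ∃ᶠ n in atTop, ρ n = a ∧ ρ (n + 1) = b)
    (B : Set S) (hB : IsBSCC (Adj P) B) (N : ℕ) (hN : ∀ n ≥ N, ρ n ∈ B) :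
    ∃ m, IsCandidate (PrefList ρ m) B := by
  obtain ⟨⟨hconn, -⟩, hbot⟩ := hB
  obtain ⟨v, hv⟩ : ∃ v, ∃ᶠ n in atTop, ρ n = v := by
    by_contra! h
    obtain ⟨n, hn⟩ := (eventually_all.2 h).exists
    exact hn (ρ n) rfl
  have hvB : v ∈ B := by
    obtain ⟨n, hn, rfl⟩ := frequently_atTop.1 hv N
    exact hN n hn
  have hall : ∀ t ∈ B, ∃ᶠ n in atTop, ρ n = t := by
    intro t ht
    have hpath := hconn.2 v hvB t ht
    clear ht
    induction hpath with
    | refl => exact hv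
    | @tail b c _ hbc ih =>
      have h := frequently_atTop.1 (hfreq b c hbc.1 ih)
      refine frequently_atTop.2 fun M => ?_
      obtain ⟨n, hn, -, h2⟩ := h M
      exact ⟨n + 1, by omega, h2⟩
  have hE : ∀ᶠ m in atTop, ∀ a b : S, a ∈ B → Adj P a b →
      ∃ i, N ≤ i ∧ i + 1 ≤ m ∧ ρ i = a ∧ ρ (i + 1) = b := by
    refine eventually_all.2 fun a => eventually_all.2 fun b => ?_
    by_cases h : a ∈ B ∧ Adj P a b
    · obtain ⟨i, h1, h2⟩ := frequently_atTop.1 (hfreq a b h.2 (hall a h.1)) N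
      filter_upwards [eventually_ge_atTop (i + 1)] with m hm _ _
      exact ⟨i, h1, hm, h2⟩
    · exact Eventually.of_forall fun m h1 h2 => absurd ⟨h1, h2⟩ h
  have hV : ∀ᶠ m in atTop, ∀ a : S, a ∈ B → ∃ i, N ≤ i ∧ i ≤ m ∧ ρ i = a := by
    refine eventually_all.2 fun a => ?_
    by_cases h : a ∈ B
    · obtain ⟨i, h1, h2⟩ := frequently_atTop.1 (hall a h) N
      filter_upwards [eventually_ge_atTop i] with m hm _
      exact ⟨i, h1, hm, h2⟩
    · exact Eventually.of_forall fun m h1 => absurd h1 h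
  obtain ⟨m, hmE, hmV⟩ := (hE.and hV).exists
  have hVset : Vset ((PrefList ρ m).drop N) = B := by
    ext a
    rw [mem_vset_drop_iff]
    constructor
    · rintro ⟨i, h1, -, rfl⟩
      exact hN i h1
    · exact hmV a
  have hsub : ∀ a b, ListAdj (PrefList ρ m) a b → Adj P a b := by
    intro a b h
    rw [← List.drop_zero (l := PrefList ρ m), listAdj_drop_iff] at h
    obtain ⟨i, -, -, rfl, rfl⟩ := h
    exact hadj i
  have hκ : StronglyConn (ListAdj ((PrefList ρ m).drop N)) B :=
    stronglyConn_mono (fun a ha b _ hab => (listAdj_drop_iff ..).2 (hmE a b ha hab)) hconn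
  have hπ : StronglyConn (ListAdj (PrefList ρ m)) B := by
    refine stronglyConn_mono (fun a ha b _ hab => ?_) hconn
    rw [← List.drop_zero (l := PrefList ρ m), listAdj_drop_iff]
    obtain ⟨i, -, h⟩ := hmE a b ha hab
    exact ⟨i, Nat.zero_le i, h⟩
  have hclosed : ∀ s ∈ B, ∀ t, ListAdj (PrefList ρ m) s t → t ∈ B :=
    fun s hs t h => hbot s hs t (hsub s t h)
  refine ⟨m, _, List.drop_suffix N _, hVset, ⟨⟨hπ, ?_⟩, hclosed⟩, hVset.symm ▸ hκ⟩
  intro K' hK' hconn'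
  refine Set.Subset.antisymm (fun t ht => ?_) hK'
  exact closed_of_reflTransGen hclosed hvB
    (Relation.ReflTransGen.mono (fun _ _ h => h.1) _ _ (hconn'.2 v (hK' hvB) t ht))

end BadRun

/-- In a finite Markov chain whose BSCCs are partitioned into good and bad ones,
almost surely every bad run (one trapped in a bad BSCC) has a finite prefix whose
candidate is defined and equals a bad BSCC. -/
theorem stmt9 {S : Type*} [Fintype S] [MeasurableSpace S] [MeasurableSingletonClass S]
    (P : S → S → ℝ) (hnn : ∀ s t, 0 ≤ P s t) (hrow : ∀ s, ∑ t, P s t = 1)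
    (good : Set S → Prop)
    (μ : Measure (ℕ → S)) [IsProbabilityMeasure μ]
    (hMarkov : ∀ (w : List S) (a b : S),
      μ (Cyl (w ++ [a, b])) = μ (Cyl (w ++ [a])) * ENNReal.ofReal (P a b)) :
    μ {ρ | (∃ B : Set S, IsBSCC (Adj P) B ∧ ¬ good B ∧ ∃ N : ℕ, ∀ n ≥ N, ρ n ∈ B) ∧
        ¬ ∃ (m : ℕ) (B' : Set S), IsBSCC (Adj P) B' ∧ ¬ good B' ∧
            IsCandidate (PrefList ρ m) B'} = 0 := by
  have hae : ∀ᵐ ρ ∂μ, ¬ ((∃ B : Set S, IsBSCC (Adj P) B ∧ ¬ good B ∧ ∃ N : ℕ, ∀ n ≥ N, ρ n ∈ B) ∧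
        ¬ ∃ (m : ℕ) (B' : Set S), IsBSCC (Adj P) B' ∧ ¬ good B' ∧
            IsCandidate (PrefList ρ m) B') := by
    filter_upwards [BadRun.ae_adj P μ hMarkov, BadRun.ae_frequently_edge P μ hMarkov]
      with ρ h1 h2
    rintro ⟨⟨B, hB, hgood, N, hN⟩, hno⟩
    obtain ⟨m, hm⟩ := BadRun.exists_candidate P ρ h1 h2 B hB N hN
    exact hno ⟨m, B, hB, hgood, hm⟩
  simpa only [ae_iff, not_not] using hae
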